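/- arXiv:1508.07613 — 2 statements merged into one kernel-verified Lean document; each statement's English description precedes it below -/
import Mathlib

section
/- Let α ∈ (0,1/2) and let x1, x2 be real numbers with 0 < x2 ≤ x1. Then 2·∫_{(0,x1)×(0,x2)} z2·(z1² + z2²)^{−(1+α)} dz1 dz2 ≤ (1/α)·(1/(1−2α) − 2^{−α})·x1^{1−2α}. -/
open MeasureTheory

/- Integrating in `z₂` first, with `p = -α`, turns `2 z₂ (z₁² + z₂²)^(p - 1)` into
`((z₁² + x₂²)^p - z₁^(2p)) / p`. Since `t ↦ t^p / p` is monotone whatever the sign of `p`, the first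
term is at most its value at `z₁ = x₁`, hence at most `(2 x₁²)^p / p`, and what remains is the
integral of a power, convergent at `0` because `2p > -1`. -/

section

variable {p a b c : ℝ}

lemma rpow_div_le_rpow_div (p : ℝ) {s t : ℝ} (hs : 0 < s) (hst : s ≤ t) :
    s ^ p / p ≤ t ^ p / p := by
  rcases le_total 0 p with hp | hp
  · exact div_le_div_of_nonneg_right (Real.rpow_le_rpow hs.le hst hp) hp
  · exact div_le_div_of_nonpos_of_le hp (Real.rpow_le_rpow_of_nonpos hs hst hp)

lemma continuous_const_add_sq_rpow (hc : 0 < c) (p : ℝ) :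
    Continuous fun y : ℝ => (c + y ^ 2) ^ p :=
  Continuous.rpow_const (by fun_prop) fun y => Or.inl (by positivity)

lemma integral_mul_const_add_sq_rpow (hc : 0 < c) (hp : p ≠ 0) (u v : ℝ) :
    ∫ y in u..v, y * (c + y ^ 2) ^ (p - 1) =
      ((c + v ^ 2) ^ p - (c + u ^ 2) ^ p) / (2 * p) := by
  have hderiv (y : ℝ) :
      HasDerivAt (fun y : ℝ => (c + y ^ 2) ^ p / (2 * p)) (y * (c + y ^ 2) ^ (p - 1)) y := by
    have hbase : HasDerivAt (fun y : ℝ => c + y ^ 2) (2 * y) y := by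
      simpa using (hasDerivAt_pow 2 y).const_add c
    have hpos : c + y ^ 2 ≠ 0 := by positivity
    refine ((hbase.rpow_const (p := p) (Or.inl hpos)).div_const (2 * p)).congr_deriv ?_
    field_simp
  have hcont : Continuous fun y : ℝ => y * (c + y ^ 2) ^ (p - 1) :=
    continuous_id.mul (continuous_const_add_sq_rpow hc (p - 1))
  rw [intervalIntegral.integral_eq_sub_of_hasDerivAt (fun y _ => hderiv y)
    (hcont.intervalIntegrable u v), sub_div]

lemma setIntegral_Ioo_mul_sq_add_sq_rpow {x : ℝ} (hx : 0 < x) (hb : 0 ≤ b) (hp : p ≠ 0) :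
    ∫ y in Set.Ioo 0 b, y * (x ^ 2 + y ^ 2) ^ (p - 1) =
      ((x ^ 2 + b ^ 2) ^ p - x ^ (2 * p)) / (2 * p) := by
  have hsq : (x ^ 2) ^ p = x ^ (2 * p) := mod_cast (Real.rpow_natCast_mul hx.le 2 p).symm
  rw [← integral_Ioc_eq_integral_Ioo, ← intervalIntegral.integral_of_le hb,
    integral_mul_const_add_sq_rpow (by positivity) hp, zero_pow two_ne_zero, add_zero, hsq]

lemma intervalIntegrable_sq_add_sq_rpow_sub_rpow (hb : 0 < b) (hp : -1 / 2 < p) :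
    IntervalIntegrable (fun x : ℝ => ((x ^ 2 + b ^ 2) ^ p - x ^ (2 * p)) / (2 * p))
      volume 0 a := by
  have hcont : Continuous fun x : ℝ => (x ^ 2 + b ^ 2) ^ p := by
    simpa only [add_comm] using continuous_const_add_sq_rpow (sq_pos_of_pos hb) p
  exact ((hcont.intervalIntegrable 0 a).sub
    (intervalIntegral.intervalIntegrable_rpow' (by linarith))).div_const (2 * p)

lemma integrableOn_mul_sq_add_sq_rpow (ha : 0 ≤ a) (hb : 0 < b) (hp : -1 / 2 < p)
    (hp₀ : p ≠ 0) :
    IntegrableOn (fun z : ℝ × ℝ => z.2 * (z.1 ^ 2 + z.2 ^ 2) ^ (p - 1))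
      (Set.Ioo 0 a ×ˢ Set.Ioo 0 b) := by
  rw [IntegrableOn, Measure.volume_eq_prod, ← Measure.prod_restrict,
    integrable_prod_iff (by fun_prop)]
  constructor
  · filter_upwards [ae_restrict_mem measurableSet_Ioo] with x hx
    have hcont : Continuous fun y : ℝ => y * (x ^ 2 + y ^ 2) ^ (p - 1) :=
      continuous_id.mul (continuous_const_add_sq_rpow (sq_pos_of_pos hx.1) (p - 1))
    exact hcont.integrableOn_Icc.mono_set Set.Ioo_subset_Icc_self
  · have hnorm : Set.EqOn
        (fun x : ℝ => ((x ^ 2 + b ^ 2) ^ p - x ^ (2 * p)) / (2 * p))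
        (fun x => ∫ y in Set.Ioo 0 b, ‖y * (x ^ 2 + y ^ 2) ^ (p - 1)‖) (Set.Ioo 0 a) := by
      intro x hx
      dsimp only
      rw [← setIntegral_Ioo_mul_sq_add_sq_rpow hx.1 hb.le hp₀]
      refine setIntegral_congr_fun measurableSet_Ioo fun y hy => ?_
      have hy₀ : 0 < y := hy.1
      exact (Real.norm_of_nonneg (by positivity)).symm
    exact ((intervalIntegrable_iff_integrableOn_Ioo_of_le ha).1
      (intervalIntegrable_sq_add_sq_rpow_sub_rpow hb hp)).congr_fun hnorm measurableSet_Ioo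

lemma setIntegral_prod_mul_sq_add_sq_rpow (ha : 0 ≤ a) (hb : 0 < b) (hp : -1 / 2 < p)
    (hp₀ : p ≠ 0) :
    ∫ z in Set.Ioo 0 a ×ˢ Set.Ioo 0 b, z.2 * (z.1 ^ 2 + z.2 ^ 2) ^ (p - 1) =
      ∫ x in 0..a, ((x ^ 2 + b ^ 2) ^ p - x ^ (2 * p)) / (2 * p) := by
  rw [Measure.volume_eq_prod,
    setIntegral_prod _ (integrableOn_mul_sq_add_sq_rpow ha hb hp hp₀),
    intervalIntegral.integral_of_le ha, integral_Ioc_eq_integral_Ioo]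
  exact setIntegral_congr_fun measurableSet_Ioo fun x hx =>
    setIntegral_Ioo_mul_sq_add_sq_rpow hx.1 hb.le hp₀

lemma setIntegral_prod_mul_sq_add_sq_rpow_le (ha : 0 ≤ a) (hb : 0 < b) (hp : -1 / 2 < p)
    (hp₀ : p ≠ 0) :
    ∫ z in Set.Ioo 0 a ×ˢ Set.Ioo 0 b, z.2 * (z.1 ^ 2 + z.2 ^ 2) ^ (p - 1) ≤
      (a * (a ^ 2 + b ^ 2) ^ p - a ^ (2 * p + 1) / (2 * p + 1)) / (2 * p) := by
  have hpow : IntervalIntegrable (fun x : ℝ => x ^ (2 * p)) volume 0 a :=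
    intervalIntegral.intervalIntegrable_rpow' (by linarith)
  have hbound : ∀ x ∈ Set.Icc 0 a, ((x ^ 2 + b ^ 2) ^ p - x ^ (2 * p)) / (2 * p) ≤
      ((a ^ 2 + b ^ 2) ^ p - x ^ (2 * p)) / (2 * p) := by
    rintro x ⟨hx₀, hxa⟩
    have hmono := rpow_div_le_rpow_div p (s := x ^ 2 + b ^ 2) (t := a ^ 2 + b ^ 2)
      (by positivity) (by gcongr)
    simp only [sub_div, mul_comm 2 p, ← div_div]
    gcongr
  calc ∫ z in Set.Ioo 0 a ×ˢ Set.Ioo 0 b, z.2 * (z.1 ^ 2 + z.2 ^ 2) ^ (p - 1)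
      = ∫ x in 0..a, ((x ^ 2 + b ^ 2) ^ p - x ^ (2 * p)) / (2 * p) :=
        setIntegral_prod_mul_sq_add_sq_rpow ha hb hp hp₀
    _ ≤ ∫ x in 0..a, ((a ^ 2 + b ^ 2) ^ p - x ^ (2 * p)) / (2 * p) :=
        intervalIntegral.integral_mono_on ha (intervalIntegrable_sq_add_sq_rpow_sub_rpow hb hp)
          ((intervalIntegrable_const.sub hpow).div_const (2 * p)) hbound
    _ = (a * (a ^ 2 + b ^ 2) ^ p - a ^ (2 * p + 1) / (2 * p + 1)) / (2 * p) := by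
        rw [intervalIntegral.integral_div,
          intervalIntegral.integral_sub intervalIntegrable_const hpow,
          intervalIntegral.integral_const, integral_rpow (Or.inl (by linarith)),
          Real.zero_rpow (by linarith), smul_eq_mul, sub_zero, sub_zero]

end

theorem stmt17_general {α x₁ x₂ : ℝ} (hα : α < 1 / 2) (hα₀ : α ≠ 0) (hx₂ : 0 < x₂)
    (hx : x₂ ≤ x₁) :
    2 * ∫ z in Set.Ioo (0 : ℝ) x₁ ×ˢ Set.Ioo (0 : ℝ) x₂,
        z.2 * (z.1 ^ 2 + z.2 ^ 2) ^ (-(1 + α)) ≤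
      1 / α * (1 / (1 - 2 * α) - 2 ^ (-α)) * x₁ ^ (1 - 2 * α) := by
  have hx₁ : 0 < x₁ := hx₂.trans_le hx
  have hrect := setIntegral_prod_mul_sq_add_sq_rpow_le hx₁.le hx₂ (p := -α) (by linarith)
    (neg_ne_zero.2 hα₀)
  rw [show -α - 1 = -(1 + α) by ring, show 2 * -α + 1 = 1 - 2 * α by ring] at hrect
  have hdiag : (x₁ ^ 2 + x₂ ^ 2) ^ (-α) / -α ≤ (2 * x₁ ^ 2) ^ (-α) / -α :=
    rpow_div_le_rpow_div (-α) (by positivity) (by nlinarith)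
  have hpow : x₁ * (2 * x₁ ^ 2) ^ (-α) = 2 ^ (-α) * x₁ ^ (1 - 2 * α) := by
    rw [Real.mul_rpow two_pos.le (sq_nonneg x₁), ← Real.rpow_natCast_mul hx₁.le, mul_left_comm,
      ← Real.rpow_one_add' hx₁.le (by push_cast; linarith)]
    push_cast
    ring_nf
  calc 2 * ∫ z in Set.Ioo (0 : ℝ) x₁ ×ˢ Set.Ioo (0 : ℝ) x₂,
        z.2 * (z.1 ^ 2 + z.2 ^ 2) ^ (-(1 + α))
      ≤ 2 * ((x₁ * (x₁ ^ 2 + x₂ ^ 2) ^ (-α) - x₁ ^ (1 - 2 * α) / (1 - 2 * α)) / (2 * -α)) := by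
        gcongr
    _ = x₁ * ((x₁ ^ 2 + x₂ ^ 2) ^ (-α) / -α) + x₁ ^ (1 - 2 * α) / (1 - 2 * α) / α := by
        field_simp
        ring
    _ ≤ x₁ * ((2 * x₁ ^ 2) ^ (-α) / -α) + x₁ ^ (1 - 2 * α) / (1 - 2 * α) / α := by
        gcongr
    _ = 1 / α * (1 / (1 - 2 * α) - 2 ^ (-α)) * x₁ ^ (1 - 2 * α) := by
        rw [← mul_div_assoc, hpow]
        ring

/-- For `α ∈ (0,1/2)` and `0 < x₂ ≤ x₁`,
`2·∫_{(0,x₁)×(0,x₂)} z₂·(z₁² + z₂²)^{-(1+α)} dz ≤ (1/α)·(1/(1-2α) - 2^{-α})·x₁^{1-2α}`. -/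
theorem stmt17 (α x₁ x₂ : ℝ) (hα : α ∈ Set.Ioo (0 : ℝ) (1/2))
    (hx₂ : 0 < x₂) (hx : x₂ ≤ x₁) :
    2 * ∫ z in Set.Ioo (0 : ℝ) x₁ ×ˢ Set.Ioo (0 : ℝ) x₂,
        z.2 * (z.1 ^ 2 + z.2 ^ 2) ^ (-(1 + α)) ≤
      1 / α * (1 / (1 - 2 * α) - 2 ^ (-α)) * x₁ ^ (1 - 2 * α) :=
  stmt17_general hα.2 hα.1.ne' hx₂ hx
end

section
/- Let C > 0, T > 0, and let A : [0,T] → (0,∞) be differentiable with A′(t) ≤ C·A(t)·(1 + log₊ A(t)) for every t ∈ [0,T]. Then A(t) ≤ exp( (1 + log₊ A(0)) · e^{Ct} ) for every t ∈ [0,T]; in particular, A grows at most double exponentially in time. -/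
/-!
Write `B = max A 1`, so that `log₊ A = log B` when `A > 0`. Unlike `A`, the function `B` need not be
differentiable, but it has a right derivative everywhere, and the growth condition becomes the
linear inequality `(log B)' ≤ C log B + max C 0` for that derivative; the constant is `max C 0`
rather than `C` because `B' = 0` where `A < 1`. Grönwall's inequality bounds `log B`, hence `A`.
-/

open Set Real

section MaxConst

variable {f : ℝ → ℝ} {f' c x : ℝ} {s : Set ℝ}

theorem hasDerivWithinAt_max_const_of_lt (hf : HasDerivWithinAt f f' s x) (hx : c < f x) :
    HasDerivWithinAt (fun t => max (f t) c) f' s x := by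
  refine hf.congr_of_eventuallyEq ?_ (max_eq_left hx.le)
  filter_upwards [hf.continuousWithinAt.eventually_const_lt hx] with t ht
  exact max_eq_left ht.le

theorem hasDerivWithinAt_max_const_of_gt (hf : ContinuousWithinAt f s x) (hx : f x < c) :
    HasDerivWithinAt (fun t => max (f t) c) 0 s x := by
  refine (hasDerivWithinAt_const x s c).congr_of_eventuallyEq ?_ (max_eq_right hx.le)
  filter_upwards [hf.eventually_lt_const hx] with t ht
  exact max_eq_right ht.le

theorem hasDerivWithinAt_max_const_of_eq (hf : HasDerivWithinAt f f' (Ici x) x) (hx : f x = c) :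
    HasDerivWithinAt (fun t => max (f t) c) (max f' 0) (Ici x) x := by
  rw [← hasDerivWithinAt_Ioi_iff_Ici, hasDerivWithinAt_iff_tendsto_slope' self_notMem_Ioi] at hf ⊢
  refine (hf.max tendsto_const_nhds).congr' ?_
  filter_upwards [self_mem_nhdsWithin] with t (ht : x < t)
  rw [slope_def_field, slope_def_field, hx, max_self, ← zero_div (t - x),
    max_div_div_right (sub_pos.2 ht).le, ← sub_self c, max_sub_sub_right]

end MaxConst

theorem log_max_one {x : ℝ} (hx : 0 < x) : log (max x 1) = max (log x) 0 := by
  rw [strictMonoOn_log.monotoneOn.map_max hx (mem_Ioi.2 one_pos), log_one]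

theorem gronwallBound_max_zero_le (δ C x : ℝ) :
    gronwallBound δ C (max C 0) x ≤ (1 + δ) * exp (C * x) := by
  rcases lt_trichotomy C 0 with hC | rfl | hC
  · rw [gronwallBound_of_K_ne_0 hC.ne, max_eq_right hC.le, zero_div]
    linarith [exp_pos (C * x)]
  · simp [gronwallBound_K0]
  · rw [gronwallBound_of_K_ne_0 hC.ne', max_eq_left hC.le, div_self hC.ne']
    linarith

section LogarithmicGrowth

variable {C a b t : ℝ} {A A' : ℝ → ℝ}

theorem exists_hasDerivWithinAt_log_max_one_le {m : ℝ} (hA : HasDerivWithinAt A m (Ici t) t)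
    (hm : 1 ≤ A t → m ≤ C * A t * (1 + log (A t))) :
    ∃ l ≤ C * log (max (A t) 1) + max C 0,
      HasDerivWithinAt (fun s => log (max (A s) 1)) l (Ici t) t := by
  have hmax : max (A t) 1 ≠ 0 := by positivity
  rcases lt_trichotomy (A t) 1 with hlt | heq | hgt
  · refine ⟨_, ?_, (hasDerivWithinAt_max_const_of_gt hA.continuousWithinAt hlt).log hmax⟩
    simp [max_eq_right hlt.le]
  · refine ⟨_, ?_, (hasDerivWithinAt_max_const_of_eq hA heq).log hmax⟩
    have hmC : m ≤ C := by simpa [heq] using hm heq.ge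
    simpa [heq] using max_le_max_right 0 hmC
  · refine ⟨_, ?_, (hasDerivWithinAt_max_const_of_lt hA hgt).log hmax⟩
    rw [max_eq_left hgt.le, div_le_iff₀ (zero_lt_one.trans hgt)]
    calc m ≤ (C * log (A t) + C) * A t := by linarith [hm hgt.le]
      _ ≤ (C * log (A t) + max C 0) * A t := by gcongr; exact le_max_left C 0

theorem log_max_one_le_gronwallBound (hcont : ContinuousOn A (Icc a b))
    (hderiv : ∀ t ∈ Ico a b, HasDerivWithinAt A (A' t) (Ici t) t)
    (hineq : ∀ t ∈ Ico a b, 1 ≤ A t → A' t ≤ C * A t * (1 + log (A t))) (ht : t ∈ Icc a b) :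
    log (max (A t) 1) ≤ gronwallBound (log (max (A a) 1)) C (max C 0) (t - a) := by
  have hlog : ContinuousOn (fun s => log (max (A s) 1)) (Icc a b) :=
    (hcont.sup continuousOn_const).log fun s _ => by positivity
  refine le_gronwallBound_of_liminf_deriv_right_le
    (f' := fun s => C * log (max (A s) 1) + max C 0) hlog ?_ le_rfl (fun _ _ => le_rfl) t ht
  intro s hs r hr
  obtain ⟨l, hl, hl'⟩ := exists_hasDerivWithinAt_log_max_one_le (hderiv s hs) (hineq s hs)
  exact hl'.liminf_right_slope_le (hl.trans_lt hr)

theorem stmt18_general (hcont : ContinuousOn A (Icc a b))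
    (hderiv : ∀ t ∈ Ico a b, HasDerivWithinAt A (A' t) (Ici t) t)
    (hineq : ∀ t ∈ Ico a b, 1 ≤ A t → A' t ≤ C * A t * (1 + log (A t))) (ht : t ∈ Icc a b) :
    A t ≤ exp ((1 + log (max (A a) 1)) * exp (C * (t - a))) :=
  calc A t ≤ max (A t) 1 := le_max_left _ _
    _ = exp (log (max (A t) 1)) := (exp_log (by positivity)).symm
    _ ≤ exp ((1 + log (max (A a) 1)) * exp (C * (t - a))) := exp_le_exp.2 <|
      (log_max_one_le_gronwallBound hcont hderiv hineq ht).trans (gronwallBound_max_zero_le ..)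

end LogarithmicGrowth

/-- If `C, T > 0` and `A : [0,T] → (0,∞)` is differentiable with
`A′(t) ≤ C·A(t)·(1 + log₊ A(t))` on `[0,T]`, then
`A(t) ≤ exp((1 + log₊ A(0))·e^{Ct})` on `[0,T]` — at most double exponential growth. -/
theorem stmt18 (C T : ℝ) (hC : 0 < C) (hT : 0 < T) (A A' : ℝ → ℝ)
    (hpos : ∀ t ∈ Set.Icc (0 : ℝ) T, 0 < A t)
    (hderiv : ∀ t ∈ Set.Icc (0 : ℝ) T, HasDerivWithinAt A (A' t) (Set.Icc (0 : ℝ) T) t)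
    (hineq : ∀ t ∈ Set.Icc (0 : ℝ) T, A' t ≤ C * A t * (1 + max (Real.log (A t)) 0)) :
    ∀ t ∈ Set.Icc (0 : ℝ) T,
      A t ≤ Real.exp ((1 + max (Real.log (A 0)) 0) * Real.exp (C * t)) := by
  intro t ht
  simpa only [sub_zero, log_max_one (hpos 0 ⟨le_rfl, hT.le⟩)] using
    stmt18_general (fun s hs => (hderiv s hs).continuousWithinAt)
      (fun s hs => (hderiv s (Ico_subset_Icc_self hs)).mono_of_mem_nhdsWithin
        (Icc_mem_nhdsGE_of_mem hs))
      (fun s hs h => by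
        simpa only [max_eq_left (log_nonneg h)] using hineq s (Ico_subset_Icc_self hs)) ht
end
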